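/- Let α > 0. (a) If α = 1, then for every ε ∈ (0,1/2) the pair (ν_1^n, W_{1,ε}) satisfies the τ-property, where W_{1,ε}(x) = Σ_{i=1}^n w_ε(x_i) and w_ε(t) = (ε e^{-1/ε}/8) t² if |t| ≤ 2/ε², and w_ε(t) = (1−2ε)|t| if |t| > 2/ε². (b) If α ≠ 1, there exist constants κ > 0 and ε₀ ∈ (0,1), depending only on α, such that for every ε ∈ (0,ε₀), every m ≥ 1 and every n, the pair (ν_α^n, W_{α,ε}^{(m)}) satisfies the m B_{ℓ^∞}-truncated τ-property, where W_{α,ε}^{(m)}(x) = Σ_{i=1}^n w_{α,ε}^{(m)}(x_i) and w_{α,ε}^{(m)}(t) = κ^{-1} e^{-(m/ε)^{α/2}} t² if |t| ≤ m/ε, and w_{α,ε}^{(m)}(t) = (1 − κ ε^{(α/2)∧1}) |t|^α if |t| > m/ε. -/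

import Mathlib

open MeasureTheory Filter Topology Pointwise

noncomputable section

/-- The (unnormalized) measure on `ℝ` with density `exp (-|x|^α)`. -/
def nuKernel (α : ℝ) : Measure ℝ :=
  volume.withDensity fun x => ENNReal.ofReal (Real.exp (-|x| ^ α))

/-- The probability measure `ν_α` on `ℝ`. -/
def nuAlpha (α : ℝ) : Measure ℝ := (nuKernel α Set.univ)⁻¹ • nuKernel α

/-- The `n`-fold product measure `ν_α^n` on `ℝ^n`. -/
def nuPi (α : ℝ) (n : ℕ) : Measure (Fin n → ℝ) := Measure.pi fun _ => nuAlpha α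

/-- `exp : ℝ≥0∞ → ℝ≥0∞` (for extended-valued exponents), with `exp ⊤ = ⊤`. -/
def eexp (x : ENNReal) : ENNReal :=
  if x = ⊤ then ⊤ else ENNReal.ofReal (Real.exp x.toReal)

/-- `x ↦ exp (-x)` for `x : ℝ≥0∞`, with `exp (-⊤) = 0`. -/
def eexpNeg (x : ENNReal) : ENNReal :=
  if x = ⊤ then 0 else ENNReal.ofReal (Real.exp (-x.toReal))

/-- Inf-convolution `f □ w (x) = inf_y (f y + w (x - y))` of an extended-valued
function `f` with a nonnegative real weight `w`. -/
def infConv {n : ℕ} (f : (Fin n → ℝ) → ENNReal) (w : (Fin n → ℝ) → ℝ)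
    (x : Fin n → ℝ) : ENNReal :=
  ⨅ y : Fin n → ℝ, f y + ENNReal.ofReal (w (x - y))

/-- `(ν, w)` satisfies the τ-property: for every nonnegative measurable `f`,
`(∫ e^{f □ w} dν) (∫ e^{-f} dν) ≤ 1`. -/
def TauProperty {n : ℕ} (ν : Measure (Fin n → ℝ)) (w : (Fin n → ℝ) → ℝ) : Prop :=
  ∀ f : (Fin n → ℝ) → ENNReal, Measurable f →
    (∫⁻ x, eexp (infConv f w x) ∂ν) * (∫⁻ x, eexpNeg (f x) ∂ν) ≤ 1

/-- `(ν, w)` satisfies the `A₀`-truncated τ-property: the same inequality for every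
nonnegative measurable `f` which is `+∞` outside `A₀`. -/
def TruncatedTauProperty {n : ℕ} (ν : Measure (Fin n → ℝ)) (w : (Fin n → ℝ) → ℝ)
    (A₀ : Set (Fin n → ℝ)) : Prop :=
  ∀ f : (Fin n → ℝ) → ENNReal, Measurable f → (∀ x ∉ A₀, f x = ⊤) →
    (∫⁻ x, eexp (infConv f w x) ∂ν) * (∫⁻ x, eexpNeg (f x) ∂ν) ≤ 1

/-- The one-dimensional weight `w_ε` for `α = 1`. -/
def wExp (ε t : ℝ) : ℝ :=
  if |t| ≤ 2 / ε ^ 2 then ε * Real.exp (-1/ε) * t ^ 2 / 8 else (1 - 2 * ε) * |t|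

/-- The one-dimensional weight `w_{α,ε}^{(m)}` for `α ≠ 1`. -/
def wAlpha (α κ ε m t : ℝ) : ℝ :=
  if |t| ≤ m / ε then κ⁻¹ * Real.exp (-(m / ε) ^ (α / 2)) * t ^ 2
  else (1 - κ * ε ^ (min (α / 2) 1)) * |t| ^ α

/-- The `ℓ^∞`-ball of radius `m` in `ℝ^n`. -/
def linftyBall (m : ℝ) (n : ℕ) : Set (Fin n → ℝ) := {h | ∀ i, |h i| ≤ m}

/-- One-dimensional Brunn–Minkowski inequality for compact sets. -/
theorem volume_add_volume_le_of_isCompact {A B : Set ℝ} (hA : IsCompact A) (hB : IsCompact B)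
    (hA' : A.Nonempty) (hB' : B.Nonempty) : volume A + volume B ≤ volume (A + B) := by
  obtain ⟨a, ha, haA⟩ := hA.exists_isGreatest hA'
  obtain ⟨b, hb, hbB⟩ := hB.exists_isLeast hB'
  have h1 : (fun x => b + x) '' A ⊆ A + B := by
    rintro _ ⟨x, hx, rfl⟩
    exact ⟨x, hx, b, hb, add_comm _ _⟩
  have h2 : (fun x => a + x) '' B ⊆ A + B := by
    rintro _ ⟨x, hx, rfl⟩
    exact ⟨a, ha, x, hx, rfl⟩
  have hm : MeasurableSet ((fun x => a + x) '' B) :=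
    (hB.image (by fun_prop)).measurableSet
  have hd : AEDisjoint volume ((fun x => b + x) '' A) ((fun x => a + x) '' B) := by
    refine measure_mono_null (t := {a + b}) ?_ (by simp)
    rintro _ ⟨⟨x, hx, rfl⟩, y, hy, hxy⟩
    have := haA hx
    have := hbB hy
    simp only [Set.mem_singleton_iff] at *
    linarith
  calc volume A + volume B
      = volume ((fun x => b + x) '' A) + volume ((fun x => a + x) '' B) := by
        simp [measure_preimage_add, Set.image_add_left]
    _ = volume ((fun x => b + x) '' A ∪ (fun x => a + x) '' B) :=
        (measure_union₀ hm.nullMeasurableSet hd).symm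
    _ ≤ volume (A + B) := measure_mono (Set.union_subset h1 h2)

/-- One-dimensional Brunn–Minkowski inequality. -/
theorem volume_add_volume_le {A B : Set ℝ} (hA : MeasurableSet A) (hB : MeasurableSet B)
    (hA' : A.Nonempty) (hB' : B.Nonempty) : volume A + volume B ≤ volume (A + B) := by
  obtain ⟨a, ha⟩ := hA'
  obtain ⟨b, hb⟩ := hB'
  refine le_of_forall_lt fun c hc => ?_
  rw [hA.measure_eq_iSup_isCompact, hB.measure_eq_iSup_isCompact] at hc
  simp only [iSup_and'] at hc
  by_contra! hcc
  refine absurd hc (not_lt.2 ?_)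
  have key : ∀ K L : Set ℝ, K ⊆ A → IsCompact K → L ⊆ B → IsCompact L →
      volume K + volume L ≤ c := by
    intro K L hK hK' hL hL'
    refine le_trans ?_ hcc
    calc volume K + volume L ≤ volume (insert a K) + volume (insert b L) := by
          gcongr <;> exact Set.subset_insert _ _
      _ ≤ volume (insert a K + insert b L) :=
          volume_add_volume_le_of_isCompact (hK'.insert a) (hL'.insert b)
            (Set.insert_nonempty _ _) (Set.insert_nonempty _ _)
      _ ≤ volume (A + B) := measure_mono (Set.add_subset_add
          (Set.insert_subset ha hK) (Set.insert_subset hb hL))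
  have : Nonempty {K : Set ℝ // K ⊆ A ∧ IsCompact K} := ⟨∅, by simp⟩
  have : Nonempty {K : Set ℝ // K ⊆ B ∧ IsCompact K} := ⟨∅, by simp⟩
  rw [iSup_subtype', iSup_subtype']
  exact ENNReal.iSup_add_iSup_le fun i j => key _ _ i.2.1 i.2.2 j.2.1 j.2.2

/-- Additive form of the one-dimensional Prékopa–Leindler inequality, for functions with
supremum equal to one. -/
theorem lintegral_add_lintegral_le_of_sup_eq_one {a b k : ℝ → ℝ} (ha : Measurable a)
    (hb : Measurable b) (hk : Measurable k) (ha0 : ∀ s, 0 ≤ a s) (hb0 : ∀ s, 0 ≤ b s)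
    (hk0 : ∀ s, 0 ≤ k s) (ha1 : IsLUB (Set.range a) 1) (hb1 : IsLUB (Set.range b) 1)
    (h : ∀ s t, a s * b t ≤ k ((s + t) / 2) ^ 2) :
    (∫⁻ s, ENNReal.ofReal (a s)) + ∫⁻ s, ENNReal.ofReal (b s)
      ≤ 2 * ∫⁻ s, ENNReal.ofReal (k s) := by
  have hmeas : ∀ f : ℝ → ℝ, Measurable fun t : ℝ => volume {s | t < f s} := fun f =>
    Antitone.measurable fun t t' htt' => measure_mono fun s hs => lt_of_le_of_lt htt' hs
  rw [lintegral_eq_lintegral_meas_lt _ (.of_forall ha0) ha.aemeasurable,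
    lintegral_eq_lintegral_meas_lt _ (.of_forall hb0) hb.aemeasurable,
    lintegral_eq_lintegral_meas_lt _ (.of_forall hk0) hk.aemeasurable,
    ← lintegral_add_left (hmeas a), ← lintegral_const_mul _ (hmeas k)]
  refine setLIntegral_mono' measurableSet_Ioi fun t ht => ?_
  have ht : 0 < t := ht
  rcases lt_or_ge t 1 with ht1 | ht1
  · obtain ⟨_, ⟨s₁, rfl⟩, hs₁, -⟩ := ha1.exists_between ht1
    obtain ⟨_, ⟨s₂, rfl⟩, hs₂, -⟩ := hb1.exists_between ht1
    refine (volume_add_volume_le (measurableSet_lt measurable_const ha)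
      (measurableSet_lt measurable_const hb) ⟨s₁, hs₁⟩ ⟨s₂, hs₂⟩).trans ?_
    have hsub : {s | t < a s} + {s | t < b s} ⊆ (2 : ℝ) • {s | t < k s} := by
      rintro _ ⟨x, hx, y, hy, rfl⟩
      refine ⟨(x + y) / 2, ?_, by simp; ring⟩
      have hx : t < a x := hx
      have hy : t < b y := hy
      refine lt_of_pow_lt_pow_left₀ 2 (hk0 _) (lt_of_lt_of_le ?_ (h x y))
      nlinarith
    refine (measure_mono hsub).trans ?_
    rw [Measure.addHaar_smul]
    simp
  · have e : ∀ f : ℝ → ℝ, IsLUB (Set.range f) 1 → {s | t < f s} = ∅ := by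
      intro f hf
      ext s
      simpa using (hf.1 ⟨s, rfl⟩).trans ht1
    simp [e a ha1, e b hb1]

theorem ENNReal.four_mul_mul_le_add_sq (x y : ENNReal) : 4 * (x * y) ≤ (x + y) ^ 2 := by
  rcases eq_or_ne (x + y) ⊤ with h | h
  · simp [h]
  · obtain ⟨hx, hy⟩ := ENNReal.add_ne_top.1 h
    lift x to NNReal using hx
    lift y to NNReal using hy
    norm_cast
    have := four_mul_le_sq_add x y
    rwa [mul_assoc] at this

/-- The one-dimensional Prékopa–Leindler inequality (for midpoints and bounded functions). -/
theorem lintegral_mul_lintegral_le_sq {a b k : ℝ → ℝ} (ha : Measurable a)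
    (hb : Measurable b) (hk : Measurable k) (ha0 : ∀ s, 0 ≤ a s) (hb0 : ∀ s, 0 ≤ b s)
    (hk0 : ∀ s, 0 ≤ k s) (ha1 : BddAbove (Set.range a)) (hb1 : BddAbove (Set.range b))
    (h : ∀ s t, a s * b t ≤ k ((s + t) / 2) ^ 2) :
    (∫⁻ s, ENNReal.ofReal (a s)) * (∫⁻ s, ENNReal.ofReal (b s))
      ≤ (∫⁻ s, ENNReal.ofReal (k s)) ^ 2 := by
  by_cases haz : ∀ s, a s = 0
  · simp [haz]
  by_cases hbz : ∀ s, b s = 0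
  · simp [hbz]
  push Not at haz hbz
  obtain ⟨s₁, hs₁⟩ := haz
  obtain ⟨s₂, hs₂⟩ := hbz
  have hA := isLUB_ciSup ha1
  have hB := isLUB_ciSup hb1
  set A := ⨆ s, a s
  set B := ⨆ s, b s
  have hA0 : 0 < A := lt_of_lt_of_le (lt_of_le_of_ne (ha0 s₁) hs₁.symm) (hA.1 ⟨s₁, rfl⟩)
  have hB0 : 0 < B := lt_of_lt_of_le (lt_of_le_of_ne (hb0 s₂) hs₂.symm) (hB.1 ⟨s₂, rfl⟩)
  have hscale : ∀ (f : ℝ → ℝ) (M : ℝ), 0 < M → IsLUB (Set.range f) M →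
      IsLUB (Set.range fun s => M⁻¹ * f s) 1 := by
    intro f M hM hf
    refine ⟨?_, fun c hc => ?_⟩
    · rintro _ ⟨s, rfl⟩
      have := hf.1 ⟨s, rfl⟩
      exact (inv_mul_le_iff₀ hM).2 (by simpa using this)
    · have : M ≤ M * c := hf.2 (by
        rintro _ ⟨s, rfl⟩
        exact (inv_mul_le_iff₀ hM).1 (hc ⟨s, rfl⟩))
      exact le_of_mul_le_mul_left (by simpa using this) hM
  set C := √(A * B)
  have hC0 : 0 < C := by positivity
  have hC2 : C ^ 2 = A * B := Real.sq_sqrt (by positivity)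
  have key := lintegral_add_lintegral_le_of_sup_eq_one (a := fun s => A⁻¹ * a s)
    (b := fun s => B⁻¹ * b s) (k := fun s => C⁻¹ * k s) (by fun_prop) (by fun_prop) (by fun_prop)
    (fun s => mul_nonneg (by positivity) (ha0 s)) (fun s => mul_nonneg (by positivity) (hb0 s))
    (fun s => mul_nonneg (by positivity) (hk0 s)) (hscale a A hA0 hA) (hscale b B hB0 hB)
    (fun s t => by
      have := h s t
      rw [mul_pow, inv_pow, hC2, mul_inv]
      calc _ = A⁻¹ * B⁻¹ * (a s * b t) := by ring
        _ ≤ _ := by gcongr)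
  have hmul : ∀ (f : ℝ → ℝ) (M : ℝ), 0 < M → Measurable f →
      ∫⁻ s, ENNReal.ofReal (M⁻¹ * f s)
        = ENNReal.ofReal M⁻¹ * ∫⁻ s, ENNReal.ofReal (f s) := by
    intro f M hM hf
    rw [← lintegral_const_mul _ (by fun_prop)]
    exact lintegral_congr fun s => ENNReal.ofReal_mul (by positivity)
  rw [hmul a A hA0 ha, hmul b B hB0 hb, hmul k C hC0 hk] at key
  set X := ∫⁻ s, ENNReal.ofReal (a s)
  set Y := ∫⁻ s, ENNReal.ofReal (b s)
  set Z := ∫⁻ s, ENNReal.ofReal (k s)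
  have h4 := (ENNReal.four_mul_mul_le_add_sq _ _).trans (pow_le_pow_left' key 2)
  have hAB : ENNReal.ofReal A⁻¹ * ENNReal.ofReal B⁻¹ = ENNReal.ofReal C⁻¹ ^ 2 := by
    rw [← ENNReal.ofReal_mul (by positivity), ← ENNReal.ofReal_pow (by positivity), inv_pow, hC2,
      mul_inv]
  have e1 : 4 * (ENNReal.ofReal A⁻¹ * X * (ENNReal.ofReal B⁻¹ * Y))
      = (4 * ENNReal.ofReal C⁻¹ ^ 2) * (X * Y) := by rw [← hAB]; ring
  have e2 : (2 * (ENNReal.ofReal C⁻¹ * Z)) ^ 2 = (4 * ENNReal.ofReal C⁻¹ ^ 2) * Z ^ 2 := by ring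
  rw [e1, e2] at h4
  refine (ENNReal.mul_le_mul_iff_right ?_ ?_).1 h4
  · simp [hC0]
  · exact ENNReal.mul_ne_top (by simp) (by simp)

/-- The odd extension to `ℝ` of a function on the half-line. -/
def oddExt (A : ℝ → ℝ) (x : ℝ) : ℝ := if 0 ≤ x then A x else -A (-x)

theorem hasDerivAt_oddExt {A A' : ℝ → ℝ} (hA : ∀ x, 0 ≤ x → HasDerivAt A (A' x) x)
    (hA0 : A 0 = 0) (x : ℝ) : HasDerivAt (oddExt A) (A' |x|) x := by
  have hneg : ∀ x ≤ 0, HasDerivAt (fun y => -A (-y)) (A' |x|) x := by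
    intro x hx
    rw [abs_of_nonpos hx]
    have h1 : HasDerivAt (fun y : ℝ => -y) (-1) x := hasDerivAt_neg x
    have h2 := ((hA (-x) (by linarith)).comp x h1).neg
    rw [mul_neg_one, neg_neg] at h2
    exact h2
  rcases lt_trichotomy x 0 with hx | rfl | hx
  · refine (hneg x hx.le).congr_of_eventuallyEq ?_
    filter_upwards [Iio_mem_nhds hx] with y hy
    exact if_neg (not_le.2 hy)
  · have h1 : HasDerivWithinAt (oddExt A) (A' |0|) (Set.Ici 0) 0 := by
      rw [abs_zero]
      exact (hA 0 le_rfl).hasDerivWithinAt.congr (fun y hy => if_pos hy) (if_pos le_rfl)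
    have h2 : HasDerivWithinAt (oddExt A) (A' |0|) (Set.Iic 0) 0 := by
      refine (hneg 0 le_rfl).hasDerivWithinAt.congr (fun y hy => ?_) (by simp [oddExt, hA0])
      rcases (show y ≤ 0 from hy).lt_or_eq with h | rfl
      · simp [oddExt, h]
      · simp [oddExt, hA0]
    have := h1.union h2
    rwa [Set.Ici_union_Iic, hasDerivWithinAt_univ] at this
  · rw [abs_of_pos hx]
    refine (hA x hx.le).congr_of_eventuallyEq ?_
    filter_upwards [Ioi_mem_nhds hx] with y hy
    exact if_pos (le_of_lt hy)

theorem abs_oddExt {A : ℝ → ℝ} (hA : ∀ x, 0 ≤ x → 0 ≤ A x) (x : ℝ) :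
    |oddExt A x| = A |x| := by
  unfold oddExt
  split_ifs with h
  · rw [abs_of_nonneg h, abs_of_nonneg (hA x h)]
  · rw [abs_neg, abs_of_neg (not_le.1 h), abs_of_nonneg (hA _ (by linarith))]

/-- The odd function equal to `1 - exp (-u)` for `u ≥ 0`. -/
def expCoord : ℝ → ℝ := oddExt fun u => 1 - Real.exp (-u)

theorem hasDerivAt_expCoord (u : ℝ) : HasDerivAt expCoord (Real.exp (-|u|)) u := by
  refine hasDerivAt_oddExt (A' := fun u => Real.exp (-u)) (fun x _ => ?_) (by simp) u
  simpa using ((hasDerivAt_neg x).exp).const_sub 1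

theorem cosh_le_exp_mul_of_nonneg {u v : ℝ} (h : 0 ≤ u + v) :
    Real.cosh ((u - v) / 2)
      ≤ Real.exp ((|u| + |v|) / 2) * (1 - |expCoord u + expCoord v| / 2) := by
  wlog huv : v ≤ u generalizing u v
  · have := this (u := v) (v := u) (by linarith) (by linarith)
    rwa [show (v - u) / 2 = -((u - v) / 2) by ring, Real.cosh_neg, add_comm |v|,
      add_comm (expCoord v)] at this
  have hu : 0 ≤ u := by linarith
  rcases le_or_gt 0 v with hv | hv
  · have e1 : Real.exp (-u) ≤ 1 := Real.exp_le_one_iff.2 (by linarith)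
    have e2 : Real.exp (-v) ≤ 1 := Real.exp_le_one_iff.2 (by linarith)
    simp only [expCoord, oddExt, hu, hv, if_true, abs_of_nonneg]
    rw [abs_of_nonneg (by linarith), Real.cosh_eq,
      show (u - v) / 2 = (u + v) / 2 + -v by ring,
      show -((u + v) / 2 + -v) = (u + v) / 2 + -u by ring, Real.exp_add, Real.exp_add]
    apply le_of_eq
    ring
  · simp only [expCoord, oddExt, hu, not_le.2 hv, if_true, if_false, abs_of_nonneg, abs_of_neg hv]
    rw [neg_neg]
    have e3 : Real.exp (-u) ≤ Real.exp v := Real.exp_le_exp.2 (by linarith)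
    have e4 : Real.exp v ≤ 1 := Real.exp_le_one_iff.2 hv.le
    rw [abs_of_nonneg (by linarith), Real.cosh_eq,
      show -((u - v) / 2) = (u + -v) / 2 + (-u + v) by ring,
      show ((u - v) / 2) = (u + -v) / 2 by ring, Real.exp_add, Real.exp_add]
    have := Real.exp_pos ((u + -v) / 2)
    have := Real.exp_pos (-u)
    nlinarith [mul_nonneg (sub_nonneg.2 e4) (Real.exp_pos (-u)).le,
      mul_nonneg (sub_nonneg.2 e4) (add_pos zero_lt_one (Real.exp_pos (-u))).le]

theorem expCoord_neg (u : ℝ) : expCoord (-u) = -expCoord u := by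
  unfold expCoord oddExt
  rcases lt_trichotomy u 0 with h | rfl | h
  · simp [h.not_ge, h.le]
  · simp
  · simp [h.not_ge, h.le]

theorem cosh_le_exp_mul (u v : ℝ) :
    Real.cosh ((u - v) / 2)
      ≤ Real.exp ((|u| + |v|) / 2) * (1 - |expCoord u + expCoord v| / 2) := by
  rcases le_total 0 (u + v) with h | h
  · exact cosh_le_exp_mul_of_nonneg h
  · have := cosh_le_exp_mul_of_nonneg (u := -u) (v := -v) (by linarith)
    rwa [show (-u - -v) / 2 = -((u - v) / 2) by ring, Real.cosh_neg, abs_neg, abs_neg,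
      expCoord_neg, expCoord_neg, ← neg_add, abs_neg] at this

/-- The even convex weight `(2 (1 - l) / l) log cosh (l t / 2)`. -/
def logCoshWeight (l t : ℝ) : ℝ := 2 * ((1 - l) / l) * Real.log (Real.cosh (l * t / 2))

/-- The density of the image of the symmetric exponential law under `u ↦ expCoord (l * u)`. -/
def betaDensity (l s : ℝ) : ℝ := (max 0 (1 - |s|)) ^ ((1 - l) / l) / (2 * l)

theorem lintegral_betaDensity {l : ℝ} (hl : 0 < l) (hl1 : l < 1) :
    ∫⁻ s, ENNReal.ofReal (betaDensity l s) ≤ 1 := by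
  set c := (1 - l) / l
  have hc : 0 < c := by have := sub_pos.2 hl1; positivity
  have hval : ∫ s in Set.Ioi (0 : ℝ), (max 0 (1 - s)) ^ c / (2 * l) = 1 / 2 := by
    have h0 : ∫ s in Set.Ioi (0 : ℝ), (max 0 (1 - s)) ^ c / (2 * l)
        = ∫ s in Set.Ioc (0 : ℝ) 1, (max 0 (1 - s)) ^ c / (2 * l) := by
      refine setIntegral_eq_of_subset_of_forall_sdiff_eq_zero measurableSet_Ioi
        Set.Ioc_subset_Ioi_self fun x hx => ?_
      have hx1 : 1 < x := by
        by_contra! h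
        exact hx.2 ⟨hx.1, h⟩
      rw [max_eq_left (by linarith), Real.zero_rpow hc.ne', zero_div]
    rw [h0, ← intervalIntegral.integral_of_le zero_le_one,
      intervalIntegral.integral_comp_sub_left (fun y => (max 0 y) ^ c / (2 * l)) 1,
      sub_self, sub_zero, intervalIntegral.integral_div]
    have : ∫ y in (0 : ℝ)..1, (max 0 y) ^ c = ∫ y in (0 : ℝ)..1, y ^ c := by
      refine intervalIntegral.integral_congr fun y hy => ?_
      rw [Set.uIcc_of_le zero_le_one] at hy
      simp [hy.1]
    rw [this, integral_rpow (Or.inl (by linarith))]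
    have : c + 1 = 1 / l := by simp only [c]; field_simp; ring
    rw [this, Real.one_rpow, Real.zero_rpow (by positivity)]
    field_simp
    norm_num
  have hI : Integrable (betaDensity l) := by
    refine Continuous.integrable_of_hasCompactSupport (Continuous.div_const
      (Continuous.rpow_const (by fun_prop) fun _ => Or.inr hc.le) _)
      (HasCompactSupport.intro (isCompact_Icc (a := -1) (b := 1)) fun s hs => ?_)
    have hs1 : 1 < |s| := by
      by_contra! h
      exact hs (abs_le.1 h)
    rw [betaDensity, max_eq_left (by linarith), Real.zero_rpow hc.ne', zero_div]
  rw [← ofReal_integral_eq_lintegral_ofReal hI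
    (.of_forall fun s => div_nonneg (Real.rpow_nonneg (le_max_left _ _) _) (by positivity))]
  have := integral_comp_abs (f := fun s : ℝ => (max 0 (1 - s)) ^ c / (2 * l))
  rw [hval] at this
  simp only [betaDensity]
  rw [this]
  norm_num

/-- `(∫ h dν) (∫ g dν) ≤ 1` whenever `h x * g y ≤ exp (c x y)` and `g` vanishes outside `A`. -/
def TwoFunctionBound {X : Type*} [MeasurableSpace X] (ν : Measure X) (c : X → X → ℝ)
    (A : Set X) : Prop :=
  ∀ h g : X → ENNReal, Measurable h → Measurable g → (∀ y ∉ A, g y = 0) →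
    (∀ x y, h x * g y ≤ ENNReal.ofReal (Real.exp (c x y))) →
    (∫⁻ x, h x ∂ν) * (∫⁻ y, g y ∂ν) ≤ 1

theorem TwoFunctionBound.mono {X : Type*} [MeasurableSpace X] {ν : Measure X}
    {c c' : X → X → ℝ} {A A' : Set X} (hc : TwoFunctionBound ν c A) (hA : A' ⊆ A)
    (h : ∀ x, ∀ y ∈ A', c' x y ≤ c x y) : TwoFunctionBound ν c' A' := by
  intro u g hu hg hgA hug
  refine hc u g hu hg (fun y hy => hgA y fun hy' => hy (hA hy')) fun x y => ?_
  by_cases hy : y ∈ A'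
  · exact (hug x y).trans (ENNReal.ofReal_le_ofReal (Real.exp_le_exp.2 (h x y hy)))
  · simp [hgA y hy]

theorem TwoFunctionBound.prod {X Y : Type*} [MeasurableSpace X] [MeasurableSpace Y]
    {μ : Measure X} {ν : Measure Y} [SFinite μ] [SFinite ν] {c : X → X → ℝ} {d : Y → Y → ℝ}
    {A : Set X} {B : Set Y} (hc : TwoFunctionBound μ c A) (hd : TwoFunctionBound ν d B) :
    TwoFunctionBound (μ.prod ν) (fun x y => c x.1 y.1 + d x.2 y.2) (A ×ˢ B) := by
  intro h g hh hg hgA hhg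
  rw [lintegral_prod _ hh.aemeasurable, lintegral_prod _ hg.aemeasurable]
  refine hc _ _ hh.lintegral_prod_right' hg.lintegral_prod_right' (fun y hy => ?_) fun x y => ?_
  · simp [hgA (y, _) fun h => hy h.1]
  · have hpos := Real.exp_pos (c x y)
    have key := hd (fun x' => ENNReal.ofReal (Real.exp (-c x y)) * h (x, x')) (fun y' => g (y, y'))
      (by fun_prop) (by fun_prop) (fun y' hy' => hgA _ fun h => hy' h.2) fun x' y' => by
        calc ENNReal.ofReal (Real.exp (-c x y)) * h (x, x') * g (y, y')
            = ENNReal.ofReal (Real.exp (-c x y)) * (h (x, x') * g (y, y')) := by ring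
          _ ≤ ENNReal.ofReal (Real.exp (-c x y)) *
              ENNReal.ofReal (Real.exp (c x y + d x' y')) := by gcongr; exact hhg _ _
          _ = ENNReal.ofReal (Real.exp (d x' y')) := by
              rw [← ENNReal.ofReal_mul (Real.exp_pos _).le, ← Real.exp_add]
              ring_nf
    rw [lintegral_const_mul _ (by fun_prop)] at key
    calc _ = ENNReal.ofReal (Real.exp (c x y)) * (ENNReal.ofReal (Real.exp (-c x y)) *
          (∫⁻ x', h (x, x') ∂ν) * ∫⁻ y', g (y, y') ∂ν) := by
          rw [← mul_assoc, ← mul_assoc, ← ENNReal.ofReal_mul (Real.exp_pos _).le, ← Real.exp_add]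
          simp
      _ ≤ ENNReal.ofReal (Real.exp (c x y)) * 1 := by gcongr
      _ = _ := mul_one _

theorem TwoFunctionBound.pi {ν : Measure ℝ} [IsProbabilityMeasure ν] {c : ℝ → ℝ → ℝ} {A : Set ℝ}
    (hc : TwoFunctionBound ν c A) (n : ℕ) :
    TwoFunctionBound (Measure.pi fun _ : Fin n => ν) (fun x y => ∑ i, c (x i) (y i))
      {y | ∀ i, y i ∈ A} := by
  induction n with
  | zero =>
    intro h g hh hg _ hhg
    have := hhg default default
    rw [Measure.pi_of_empty (fun _ : Fin 0 => ν) default, lintegral_dirac' _ hh,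
      lintegral_dirac' _ hg]
    simpa using this
  | succ n ih =>
    intro h g hh hg hgA hhg
    have e := (measurePreserving_piFinSuccAbove (fun _ : Fin (n + 1) => ν) 0).symm
    rw [← e.lintegral_comp hh, ← e.lintegral_comp hg]
    refine hc.prod ih _ _ (hh.comp e.measurable) (hg.comp e.measurable) ?_ ?_
    · rintro ⟨y, z⟩ hy
      refine hgA _ fun hyz => hy ⟨?_, fun i => ?_⟩
      · simpa using hyz 0
      · simpa using hyz i.succ
    · rintro ⟨x, x'⟩ ⟨y, y'⟩
      refine (hhg _ _).trans (le_of_eq ?_)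
      simp [Fin.sum_univ_succ]

section OneDim

variable {p U : ℝ → ℝ} {l : ℝ}

theorem strictMono_of_hasDerivAt (hp : ∀ x, 0 < p x)
    (hU : ∀ x, HasDerivAt U (2 * p x * Real.exp |U x|) x) : StrictMono U := by
  refine strictMono_of_deriv_pos fun x => ?_
  rw [(hU x).deriv]
  have := hp x
  positivity

theorem strictMono_expCoord : StrictMono expCoord :=
  strictMono_of_deriv_pos fun x => by
    rw [(hasDerivAt_expCoord x).deriv]
    positivity

/-- Change of variables `s = expCoord (l * U x)`. -/
theorem lintegral_extend_expCoord (hl : 0 < l) (hp : ∀ x, 0 < p x) (hpm : Measurable p)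
    (hU : ∀ x, HasDerivAt U (2 * p x * Real.exp |U x|) x) {h : ℝ → ℝ} (hh : Measurable h) :
    ∫⁻ s, ENNReal.ofReal (Function.extend (fun x => expCoord (l * U x))
        (fun x => h x * (Real.exp (-((1 - l) * |U x|)) / (2 * l))) 0 s)
      = ∫⁻ x, ENNReal.ofReal (h x) ∂(volume.withDensity fun x => ENNReal.ofReal (p x)) := by
  have hUm := strictMono_of_hasDerivAt hp hU
  have hΨm : StrictMono fun x => expCoord (l * U x) := fun x y hxy =>
    strictMono_expCoord (mul_lt_mul_of_pos_left (hUm hxy) hl)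
  set Ψ := fun x => expCoord (l * U x)
  have hΨ : ∀ x, HasDerivAt Ψ
      (Real.exp (-|l * U x|) * (l * (2 * p x * Real.exp |U x|))) x := fun x =>
    (hasDerivAt_expCoord (l * U x)).comp x ((hU x).const_mul l)
  rw [lintegral_withDensity_eq_lintegral_mul _ (by fun_prop) (by fun_prop),
    ← setLIntegral_eq_of_support_subset (s := Ψ '' Set.univ),
    lintegral_image_eq_lintegral_abs_deriv_mul MeasurableSet.univ
      (fun x _ => (hΨ x).hasDerivWithinAt) hΨm.injective.injOn, Measure.restrict_univ]
  · refine lintegral_congr fun x => ?_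
    rw [hΨm.injective.extend_apply, ← ENNReal.ofReal_mul (abs_nonneg _), Pi.mul_apply,
      ← ENNReal.ofReal_mul (hp x).le, abs_of_pos (by have := hp x; positivity), abs_mul,
      abs_of_pos hl]
    congr 1
    calc _ = p x * h x * (Real.exp (-(l * |U x|)) * Real.exp |U x| *
          Real.exp (-((1 - l) * |U x|))) * (l * 2 / (2 * l)) := by ring
      _ = p x * h x := by
        rw [← Real.exp_add, ← Real.exp_add, show -(l * |U x|) + |U x| + -((1 - l) * |U x|) = 0 by
          ring, Real.exp_zero, mul_comm l 2, div_self (by positivity)]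
        ring
  · intro s hs
    by_contra hsr
    refine hs ?_
    rw [Set.image_univ] at hsr
    simp only
    rw [Function.extend_apply' _ _ _ (by simpa using hsr)]
    simp

theorem logCoshWeight_le (hl : 0 < l) (hl1 : l < 1) (u v : ℝ) :
    Real.exp (logCoshWeight l (u - v)) * (Real.exp (-((1 - l) * |u|)) / (2 * l) *
      (Real.exp (-((1 - l) * |v|)) / (2 * l)))
      ≤ betaDensity l ((expCoord (l * u) + expCoord (l * v)) / 2) ^ 2 := by
  have hc : 0 < (1 - l) / l := by have := sub_pos.2 hl1; positivity
  have hkey := cosh_le_exp_mul (l * u) (l * v)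
  set M := 1 - |expCoord (l * u) + expCoord (l * v)| / 2 with hM
  have hM0 : 0 < M := by
    have h1 := (Real.cosh_pos ((l * u - l * v) / 2)).trans_le hkey
    exact pos_of_mul_pos_right h1 (Real.exp_pos _).le
  have hlog := Real.log_le_log (Real.cosh_pos _) hkey
  rw [Real.log_mul (Real.exp_ne_zero _) hM0.ne', Real.log_exp, abs_mul, abs_mul,
    abs_of_pos hl] at hlog
  have hW : logCoshWeight l (u - v) + -((1 - l) * |u|) + -((1 - l) * |v|)
      ≤ 2 * ((1 - l) / l) * Real.log M := by
    have := mul_le_mul_of_nonneg_left hlog (by positivity : 0 ≤ 2 * ((1 - l) / l))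
    rw [mul_add, show 2 * ((1 - l) / l) * ((l * |u| + l * |v|) / 2)
      = (1 - l) * |u| + (1 - l) * |v| by field_simp] at this
    rw [logCoshWeight, mul_sub]
    linarith
  have hb : betaDensity l ((expCoord (l * u) + expCoord (l * v)) / 2)
      = Real.exp ((1 - l) / l * Real.log M) / (2 * l) := by
    rw [betaDensity, abs_div, abs_two, ← hM, max_eq_right hM0.le, Real.rpow_def_of_pos hM0,
      mul_comm]
  rw [hb, div_pow, ← Real.exp_nat_mul]
  calc _ = Real.exp (logCoshWeight l (u - v) + -((1 - l) * |u|) + -((1 - l) * |v|))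
        / (2 * l) ^ 2 := by rw [Real.exp_add, Real.exp_add]; ring
    _ ≤ _ := by
      gcongr
      push_cast
      linarith

theorem lintegral_mul_lintegral_le_one_of_bounded (hl : 0 < l) (hl1 : l < 1)
    (hp : ∀ x, 0 < p x) (hpm : Measurable p)
    (hU : ∀ x, HasDerivAt U (2 * p x * Real.exp |U x|) x) {h g : ℝ → ℝ} (hh : Measurable h)
    (hg : Measurable g) (hh0 : ∀ x, 0 ≤ h x) (hg0 : ∀ x, 0 ≤ g x) {N : ℝ} (hhN : ∀ x, h x ≤ N)
    (hgN : ∀ x, g x ≤ N)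
    (hhg : ∀ x y, h x * g y ≤ Real.exp (logCoshWeight l (U x - U y))) :
    (∫⁻ x, ENNReal.ofReal (h x) ∂(volume.withDensity fun x => ENNReal.ofReal (p x))) *
      (∫⁻ x, ENNReal.ofReal (g x) ∂(volume.withDensity fun x => ENNReal.ofReal (p x))) ≤ 1 := by
  rw [← lintegral_extend_expCoord hl hp hpm hU hh, ← lintegral_extend_expCoord hl hp hpm hU hg]
  have hUm := strictMono_of_hasDerivAt hp hU
  have hΨm : StrictMono fun x => expCoord (l * U x) := fun x y hxy =>
    strictMono_expCoord (mul_lt_mul_of_pos_left (hUm hxy) hl)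
  set Ψ := fun x => expCoord (l * U x)
  have hemb : MeasurableEmbedding Ψ := hΨm.monotone.measurable.measurableEmbedding hΨm.injective
  set w : ℝ → ℝ := fun x => Real.exp (-((1 - l) * |U x|)) / (2 * l) with hw
  have hw0 : ∀ x, 0 < w x := fun x => by positivity
  have hw1 : ∀ x, w x ≤ 1 / (2 * l) := fun x => by
    have : 0 ≤ (1 - l) * |U x| := mul_nonneg (by linarith) (abs_nonneg _)
    simp only [hw]
    gcongr
    exact Real.exp_le_one_iff.2 (by linarith)
  have hwm : Measurable w := by
    have := hUm.monotone.measurable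
    fun_prop
  have hrange : ∀ f : ℝ → ℝ, ∀ s, Function.extend Ψ (fun x => f x * w x) 0 s = 0 ∨
      ∃ x, Ψ x = s ∧ Function.extend Ψ (fun x => f x * w x) 0 s = f x * w x := by
    intro f s
    by_cases hs : ∃ x, Ψ x = s
    · obtain ⟨x, rfl⟩ := hs
      exact Or.inr ⟨x, rfl, hΨm.injective.extend_apply _ _ _⟩
    · exact Or.inl (by rw [Function.extend_apply' _ _ _ hs]; rfl)
  have hnn : ∀ f : ℝ → ℝ, (∀ x, 0 ≤ f x) → ∀ s,
      0 ≤ Function.extend Ψ (fun x => f x * w x) 0 s := by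
    intro f hf s
    rcases hrange f s with h | ⟨x, -, h⟩ <;> rw [h]
    exact mul_nonneg (hf x) (hw0 x).le
  have hbdd : ∀ f : ℝ → ℝ, (∀ x, 0 ≤ f x) → (∀ x, f x ≤ N) →
      BddAbove (Set.range (Function.extend Ψ (fun x => f x * w x) 0)) := by
    intro f hf hfN
    have hN : 0 ≤ N := (hf 0).trans (hfN 0)
    refine ⟨N * (1 / (2 * l)), ?_⟩
    rintro _ ⟨s, rfl⟩
    rcases hrange f s with h | ⟨x, -, h⟩ <;> rw [h]
    · positivity
    · exact mul_le_mul (hfN x) (hw1 x) (hw0 x).le hN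
  have hc : 0 < (1 - l) / l := by have := sub_pos.2 hl1; positivity
  have hβ : Measurable (betaDensity l) := (Continuous.div_const
      (Continuous.rpow_const (by fun_prop) fun _ => Or.inr hc.le) _).measurable
  have hβ0 : ∀ s, 0 ≤ betaDensity l s := fun s =>
    div_nonneg (Real.rpow_nonneg (le_max_left _ _) _) (by positivity)
  refine (lintegral_mul_lintegral_le_sq (hemb.measurable_extend (hh.mul hwm) measurable_const)
    (hemb.measurable_extend (hg.mul hwm) measurable_const) hβ (hnn h hh0) (hnn g hg0) hβ0
    (hbdd h hh0 hhN) (hbdd g hg0 hgN) fun s t => ?_).trans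
    (pow_le_one' (lintegral_betaDensity hl hl1) 2)
  rcases hrange h s with hs | ⟨x, rfl, hs⟩
  · erw [hs]
    simp [sq_nonneg]
  rcases hrange g t with ht | ⟨y, rfl, ht⟩
  · erw [ht]
    simp [sq_nonneg]
  erw [hs, ht]
  refine le_trans ?_ (logCoshWeight_le hl hl1 (U x) (U y))
  calc h x * w x * (g y * w y) = h x * g y * (w x * w y) := by ring
    _ ≤ _ := mul_le_mul_of_nonneg_right (hhg x y) (mul_nonneg (hw0 x).le (hw0 y).le)

theorem lintegral_eq_iSup_lintegral_truncation {X : Type*} [MeasurableSpace X] (ν : Measure X)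
    {h : X → ENNReal} (hh : Measurable h) :
    ∫⁻ x, h x ∂ν = ⨆ n : ℕ, ∫⁻ x, ENNReal.ofReal (min (h x) n).toReal ∂ν := by
  have hfin : ∀ (x : X) (n : ℕ), min (h x) n ≠ ⊤ := fun x n =>
    ne_top_of_le_ne_top (ENNReal.natCast_ne_top n) (min_le_right _ _)
  simp_rw [fun x n => ENNReal.ofReal_toReal (hfin x n)]
  rw [← lintegral_iSup (f := fun (n : ℕ) x => min (h x) (n : ENNReal)) (fun n => by fun_prop)
    (fun m n hmn x => min_le_min le_rfl (by exact_mod_cast hmn))]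
  refine lintegral_congr fun x => ?_
  rw [← inf_iSup_eq, ENNReal.iSup_natCast, inf_top_eq]

/-- The two-function inequality for a law on the line which is the image of the symmetric
exponential law under the inverse of `U`. -/
theorem twoFunctionBound_logCoshWeight (hl : 0 < l) (hl1 : l < 1)
    (hp : ∀ x, 0 < p x) (hpm : Measurable p)
    (hU : ∀ x, HasDerivAt U (2 * p x * Real.exp |U x|) x) :
    TwoFunctionBound (volume.withDensity fun x => ENNReal.ofReal (p x))
      (fun x y => logCoshWeight l (U x - U y)) Set.univ := by
  intro h g hh hg _ hhg
  rw [lintegral_eq_iSup_lintegral_truncation _ hh, lintegral_eq_iSup_lintegral_truncation _ hg]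
  rw [ENNReal.iSup_mul]
  refine iSup_le fun m => ?_
  rw [ENNReal.mul_iSup]
  refine iSup_le fun n => ?_
  have hb : ∀ (f : ℝ → ENNReal) (k : ℕ) (x : ℝ), k ≤ max m n →
      (min (f x) k).toReal ≤ (max m n : ℕ) := fun f k x hk => by
    refine (ENNReal.toReal_mono (ENNReal.natCast_ne_top k) (min_le_right _ _)).trans ?_
    rw [ENNReal.toReal_natCast]
    exact_mod_cast hk
  refine lintegral_mul_lintegral_le_one_of_bounded hl hl1 hp hpm hU (by fun_prop) (by fun_prop)
    (fun _ => ENNReal.toReal_nonneg) (fun _ => ENNReal.toReal_nonneg)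
    (fun x => hb h m x (le_max_left _ _)) (fun x => hb g n x (le_max_right _ _)) fun x y => ?_
  rw [← ENNReal.toReal_mul]
  refine ENNReal.toReal_le_of_le_ofReal (Real.exp_pos _).le (le_trans ?_ (hhg x y))
  exact mul_le_mul' (min_le_left _ _) (min_le_left _ _)

end OneDim

theorem measurable_eexpNeg : Measurable eexpNeg := by
  unfold eexpNeg
  exact Measurable.ite (measurableSet_singleton _) measurable_const (by fun_prop)

theorem eexp_mono : Monotone eexp := by
  intro x y hxy
  unfold eexp
  split_ifs with hx hy hy
  · exact le_rfl
  · exact absurd (top_le_iff.1 (hx ▸ hxy)) hy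
  · exact le_top
  · exact ENNReal.ofReal_le_ofReal (Real.exp_le_exp.2 (ENNReal.toReal_mono hy hxy))

theorem eexp_add_mul_eexpNeg {x : ENNReal} (hx : x ≠ ⊤) {r : ℝ} (hr : 0 ≤ r) :
    eexp (x + ENNReal.ofReal r) * eexpNeg x = ENNReal.ofReal (Real.exp r) := by
  rw [eexp, eexpNeg, if_neg hx, if_neg (by simp [hx]), ← ENNReal.ofReal_mul (Real.exp_pos _).le,
    ← Real.exp_add, ENNReal.toReal_add hx ENNReal.ofReal_ne_top, ENNReal.toReal_ofReal hr]
  congr 2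
  ring

theorem TwoFunctionBound.truncatedTauProperty {n : ℕ} {ν : Measure (Fin n → ℝ)}
    {c : (Fin n → ℝ) → (Fin n → ℝ) → ℝ} {A : Set (Fin n → ℝ)} {w : (Fin n → ℝ) → ℝ}
    (h : TwoFunctionBound ν c A) (hc : ∀ x y, 0 ≤ c x y)
    (hw : ∀ x, ∀ y ∈ A, w (x - y) ≤ c x y) : TruncatedTauProperty ν w A := by
  intro f hf hfA
  obtain ⟨φ, hφ, hle, heq⟩ := exists_measurable_le_lintegral_eq ν fun x => eexp (infConv f w x)
  rw [heq]
  refine h φ _ hφ (measurable_eexpNeg.comp hf) (fun y hy => ?_) fun x y => ?_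
  · simp [eexpNeg, hfA y hy]
  by_cases hy : f y = ⊤
  · simp [eexpNeg, hy]
  have hyA : y ∈ A := by
    by_contra hyA
    exact hy (hfA y hyA)
  rw [← eexp_add_mul_eexpNeg hy (hc x y)]
  refine mul_le_mul' ((hle x).trans (eexp_mono ((iInf_le _ y).trans ?_))) le_rfl
  gcongr
  exact hw x y hyA

theorem nuPi_truncatedTauProperty {α : ℝ} [IsProbabilityMeasure (nuAlpha α)] {c : ℝ → ℝ → ℝ}
    {A : Set ℝ} {w : ℝ → ℝ} (h : TwoFunctionBound (nuAlpha α) c A) (hc : ∀ x y, 0 ≤ c x y)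
    (hw : ∀ x, ∀ y ∈ A, w (x - y) ≤ c x y) (n : ℕ) :
    TruncatedTauProperty (nuPi α n) (fun x => ∑ i, w (x i)) {y | ∀ i, y i ∈ A} :=
  (h.pi n).truncatedTauProperty (fun _ _ => Finset.sum_nonneg fun _ _ => hc _ _)
    fun x _ hy => Finset.sum_le_sum fun i _ => hw (x i) _ (hy i)

theorem integrable_exp_neg_abs_rpow {α : ℝ} (hα : 0 < α) :
    Integrable fun x : ℝ => Real.exp (-|x| ^ α) := by
  refine Integrable.of_integral_ne_zero ?_
  rw [integral_comp_abs (f := fun x => Real.exp (-x ^ α)), integral_exp_neg_rpow hα]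
  have := Real.Gamma_pos_of_pos (s := 1 / α + 1) (by positivity)
  positivity

/-- Half of the total mass of `nuKernel α`. -/
def halfMass (α : ℝ) : ℝ := ∫ x in Set.Ioi (0 : ℝ), Real.exp (-|x| ^ α)

theorem halfMass_eq_gamma {α : ℝ} (hα : 0 < α) : halfMass α = Real.Gamma (1 / α + 1) := by
  rw [← integral_exp_neg_rpow hα]
  refine setIntegral_congr_fun measurableSet_Ioi fun x hx => ?_
  simp [abs_of_pos (Set.mem_Ioi.1 hx)]

theorem halfMass_pos {α : ℝ} (hα : 0 < α) : 0 < halfMass α := by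
  rw [halfMass_eq_gamma hα]
  exact Real.Gamma_pos_of_pos (by positivity)

theorem halfMass_one : halfMass 1 = 1 := by
  rw [halfMass_eq_gamma one_pos]
  norm_num

theorem nuKernel_univ {α : ℝ} (hα : 0 < α) :
    nuKernel α Set.univ = ENNReal.ofReal (2 * halfMass α) := by
  rw [nuKernel, withDensity_apply _ MeasurableSet.univ, Measure.restrict_univ,
    ← ofReal_integral_eq_lintegral_ofReal (integrable_exp_neg_abs_rpow hα)
      (ae_of_all _ fun x => (Real.exp_pos _).le),
    integral_comp_abs (f := fun x => Real.exp (-x ^ α)), halfMass]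
  congr 2
  refine setIntegral_congr_fun measurableSet_Ioi fun x hx => ?_
  simp [abs_of_pos (Set.mem_Ioi.1 hx)]

theorem isProbabilityMeasure_nuAlpha {α : ℝ} (hα : 0 < α) : IsProbabilityMeasure (nuAlpha α) := by
  constructor
  have := halfMass_pos hα
  rw [nuAlpha, Measure.smul_apply, nuKernel_univ hα, smul_eq_mul]
  exact ENNReal.inv_mul_cancel (by simpa using this) ENNReal.ofReal_ne_top

theorem nuAlpha_eq_withDensity {α : ℝ} (hα : 0 < α) :
    nuAlpha α = volume.withDensity fun x =>
      ENNReal.ofReal (Real.exp (-|x| ^ α) / (2 * halfMass α)) := by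
  have := halfMass_pos hα
  rw [nuAlpha, nuKernel_univ hα, nuKernel, ← withDensity_smul _ (by fun_prop)]
  congr 1
  ext x
  rw [Pi.smul_apply, smul_eq_mul, ENNReal.ofReal_div_of_pos (by positivity), mul_comm]
  rfl

theorem abs_sub_log_two_le_log_cosh (s : ℝ) : |s| - Real.log 2 ≤ Real.log (Real.cosh s) := by
  rw [← Real.log_exp |s|, ← Real.log_div (Real.exp_pos _).ne' two_ne_zero, ← Real.cosh_abs,
    Real.cosh_eq]
  gcongr
  exact le_add_of_nonneg_right (Real.exp_pos _).le

theorem one_add_sq_div_two_le_cosh (s : ℝ) : 1 + s ^ 2 / 2 ≤ Real.cosh s := by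
  have h : (s / 2) ^ 2 ≤ Real.sinh (s / 2) ^ 2 := by
    rw [sq_le_sq, Real.abs_sinh]
    exact Real.self_le_sinh_iff.2 (abs_nonneg _)
  have h2 := Real.cosh_two_mul (s / 2)
  rw [mul_div_cancel₀ s two_ne_zero, Real.cosh_sq] at h2
  linarith

theorem sq_div_le_log_cosh (s : ℝ) : s ^ 2 / 2 / (1 + s ^ 2 / 2) ≤ Real.log (Real.cosh s) := by
  refine le_trans ?_ (Real.one_sub_inv_le_log_of_pos (Real.cosh_pos s))
  have h := inv_anti₀ (by positivity) (one_add_sq_div_two_le_cosh s)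
  have h2 : s ^ 2 / 2 / (1 + s ^ 2 / 2) = 1 - (1 + s ^ 2 / 2)⁻¹ := by field_simp; ring
  linarith

theorem logCoshWeight_nonneg {l : ℝ} (hl : 0 < l) (hl1 : l ≤ 1) (t : ℝ) :
    0 ≤ logCoshWeight l t :=
  mul_nonneg (mul_nonneg zero_le_two (div_nonneg (sub_nonneg.2 hl1) hl.le))
    (Real.log_nonneg (Real.one_le_cosh _))

theorem logCoshWeight_le_of_abs_le {l s t : ℝ} (hl : 0 < l) (hl1 : l ≤ 1) (h : |s| ≤ |t|) :
    logCoshWeight l s ≤ logCoshWeight l t := by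
  refine mul_le_mul_of_nonneg_left (Real.log_le_log (Real.cosh_pos _) (Real.cosh_le_cosh.2 ?_))
    (mul_nonneg zero_le_two (div_nonneg (sub_nonneg.2 hl1) hl.le))
  rw [abs_div, abs_div, abs_mul, abs_mul]
  gcongr

theorem linear_le_logCoshWeight {l : ℝ} (hl : 0 < l) (hl1 : l ≤ 1) (t : ℝ) :
    (1 - l) * (|t| - 2 / l) ≤ logCoshWeight l t := by
  have h := abs_sub_log_two_le_log_cosh (l * t / 2)
  rw [abs_div, abs_mul, abs_of_pos hl, abs_two] at h
  have h2 := Real.log_two_lt_d9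
  calc (1 - l) * (|t| - 2 / l) = 2 * ((1 - l) / l) * (l * |t| / 2 - 1) := by field_simp
    _ ≤ 2 * ((1 - l) / l) * Real.log (Real.cosh (l * t / 2)) := by
      refine mul_le_mul_of_nonneg_left (by linarith) ?_
      exact mul_nonneg zero_le_two (div_nonneg (sub_nonneg.2 hl1) hl.le)

theorem quadratic_le_logCoshWeight {l : ℝ} (hl : 0 < l) (hl1 : l ≤ 1 / 2) (t : ℝ) :
    l * t ^ 2 / (8 * (1 + (l * t / 2) ^ 2 / 2)) ≤ logCoshWeight l t := by
  have h1 : 1 / l ≤ 2 * ((1 - l) / l) := by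
    rw [← mul_div_assoc]
    gcongr
    linarith
  refine le_trans (le_of_eq ?_) (mul_le_mul h1 (sq_div_le_log_cosh (l * t / 2))
    (by positivity) ((by positivity : 0 ≤ 1 / l).trans h1))
  field_simp
  ring

theorem wExp_le_logCoshWeight {ε : ℝ} (hε : 0 < ε) (hε1 : ε < 1 / 2) (t : ℝ) :
    wExp ε t ≤ logCoshWeight ε t := by
  unfold wExp
  split_ifs with ht
  · refine le_trans ?_ (quadratic_le_logCoshWeight hε hε1.le t)
    have hs : ε * |t| / 2 ≤ 1 / ε := by
      calc ε * |t| / 2 ≤ ε * (2 / ε ^ 2) / 2 := by gcongr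
        _ = 1 / ε := by field_simp
    have hs0 : 0 ≤ ε * |t| / 2 := by positivity
    have h1 : 1 + (ε * t / 2) ^ 2 / 2 ≤ Real.exp (1 / ε) := by
      have h2 := Real.quadratic_le_exp_of_nonneg hs0
      have h3 : (ε * |t| / 2) ^ 2 = (ε * t / 2) ^ 2 := by
        rw [div_pow, mul_pow, sq_abs]; ring
      rw [h3] at h2
      linarith [Real.exp_le_exp.2 hs]
    rw [neg_div, Real.exp_neg]
    calc ε * (Real.exp (1 / ε))⁻¹ * t ^ 2 / 8 = ε * t ^ 2 / (8 * Real.exp (1 / ε)) := by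
          field_simp
      _ ≤ _ := by gcongr
  · refine le_trans ?_ (linear_le_logCoshWeight hε (by linarith) t)
    push Not at ht
    have h1 : 2 / ε ≤ ε * |t| := by
      calc 2 / ε = ε * (2 / ε ^ 2) := by field_simp
        _ ≤ _ := by gcongr
    nlinarith [abs_nonneg t]

theorem tauProperty_nuPi_one {ε : ℝ} (hε : 0 < ε) (hε1 : ε < 1 / 2) (n : ℕ) :
    TauProperty (nuPi 1 n) (fun x => ∑ i, wExp ε (x i)) := by
  have := isProbabilityMeasure_nuAlpha one_pos
  have h := twoFunctionBound_logCoshWeight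
    (p := fun x => Real.exp (-|x| ^ (1 : ℝ)) / (2 * halfMass 1)) (U := id) hε (by linarith)
    (fun x => by rw [halfMass_one]; positivity) (by fun_prop) fun x => by
      refine (hasDerivAt_id x).congr_deriv ?_
      rw [halfMass_one, Real.rpow_one, Real.exp_neg, id]
      field_simp
  rw [← nuAlpha_eq_withDensity one_pos] at h
  have key := nuPi_truncatedTauProperty (w := wExp ε) h
    (fun _ _ => logCoshWeight_nonneg hε (by linarith) _)
    (fun x y _ => wExp_le_logCoshWeight hε hε1 (x - y)) n
  exact fun f hf => key f hf fun x hx => absurd (fun _ => Set.mem_univ _) hx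

section Transport

variable {α : ℝ}

/-- The mass that `nuKernel α` gives to `(x, ∞)`. -/
def tailMass (α x : ℝ) : ℝ := ∫ t in Set.Ioi x, Real.exp (-|t| ^ α)

theorem continuous_exp_neg_abs_rpow (hα : 0 < α) : Continuous fun x : ℝ => Real.exp (-|x| ^ α) :=
  Real.continuous_exp.comp (continuous_abs.rpow_const fun _ => Or.inr hα.le).neg

theorem hasDerivAt_tailMass (hα : 0 < α) (x : ℝ) :
    HasDerivAt (tailMass α) (-Real.exp (-|x| ^ α)) x := by
  have hint := integrable_exp_neg_abs_rpow hα
  have h : tailMass α = fun x => halfMass α - ∫ t in (0 : ℝ)..x, Real.exp (-|t| ^ α) := by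
    ext y
    rw [eq_sub_iff_add_eq, add_comm]
    exact intervalIntegral.integral_interval_add_Ioi hint.integrableOn hint.integrableOn
  rw [h]
  exact ((continuous_exp_neg_abs_rpow hα).integral_hasStrictDerivAt 0 x).hasDerivAt.const_sub _

theorem tailMass_pos (hα : 0 < α) (x : ℝ) : 0 < tailMass α x := by
  rw [tailMass, integral_pos_iff_support_of_nonneg (fun t => (Real.exp_pos _).le)
    (integrable_exp_neg_abs_rpow hα).integrableOn]
  have : (Function.support fun t : ℝ => Real.exp (-|t| ^ α)) = Set.univ :=
    Set.eq_univ_of_forall fun t => (Real.exp_pos _).ne'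
  simp [this]

theorem tailMass_le_halfMass (hα : 0 < α) {x : ℝ} (hx : 0 ≤ x) : tailMass α x ≤ halfMass α :=
  setIntegral_mono_set (integrable_exp_neg_abs_rpow hα).integrableOn
    (ae_of_all _ fun _ => (Real.exp_pos _).le) (Set.Ioi_subset_Ioi hx).eventuallyLE

theorem tailMass_le (hα : 0 < α) {δ x : ℝ} (hδ : 0 < δ) (hδ1 : δ ≤ 1) (hx : 0 ≤ x) :
    tailMass α x ≤ Real.exp (-(1 - δ) * x ^ α) * (δ ^ (-1 / α) * halfMass α) := by
  rw [halfMass_eq_gamma hα, ← integral_exp_neg_mul_rpow hα hδ, ← integral_const_mul]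
  have hpos : ∀ t : ℝ, 0 ≤ Real.exp (-(1 - δ) * x ^ α) * Real.exp (-δ * t ^ α) :=
    fun t => by positivity
  have hint : IntegrableOn (fun t : ℝ => Real.exp (-(1 - δ) * x ^ α) * Real.exp (-δ * t ^ α))
      (Set.Ioi 0) := by
    refine (Integrable.of_integral_ne_zero ?_).const_mul _
    rw [integral_exp_neg_mul_rpow hα hδ]
    have := Real.Gamma_pos_of_pos (s := 1 / α + 1) (by positivity)
    positivity
  refine le_trans (setIntegral_mono_on (integrable_exp_neg_abs_rpow hα).integrableOn
    (hint.mono_set (Set.Ioi_subset_Ioi hx)) measurableSet_Ioi fun t ht => ?_)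
    (setIntegral_mono_set hint (ae_of_all _ hpos) (Set.Ioi_subset_Ioi hx).eventuallyLE)
  rw [← Real.exp_add, Real.exp_le_exp]
  have ht : x < t := ht
  rw [abs_of_pos (hx.trans_lt ht)]
  have := Real.rpow_le_rpow hx ht.le hα.le
  nlinarith

theorem mul_exp_le_tailMass (hα : 0 < α) {m : ℝ} (hm : 0 ≤ m) :
    m * Real.exp (-(2 * m) ^ α) ≤ tailMass α m := by
  have hint := integrable_exp_neg_abs_rpow hα
  calc m * Real.exp (-(2 * m) ^ α) = ∫ _ in Set.Ioc m (2 * m), Real.exp (-(2 * m) ^ α) := by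
        rw [setIntegral_const, smul_eq_mul, Measure.real, Real.volume_Ioc,
          ENNReal.toReal_ofReal (by linarith)]
        ring
    _ ≤ ∫ t in Set.Ioc m (2 * m), Real.exp (-|t| ^ α) := by
        refine setIntegral_mono_on (integrableOn_const (by simp)) hint.integrableOn
          measurableSet_Ioc fun t ht => ?_
        rw [abs_of_nonneg (hm.trans ht.1.le)]
        gcongr
        · exact hm.trans ht.1.le
        · exact ht.2
    _ ≤ _ := setIntegral_mono_set hint.integrableOn (ae_of_all _ fun t => (Real.exp_pos _).le)
        Set.Ioc_subset_Ioi_self.eventuallyLE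

/-- `exp (-logTail α x)` is the `nuAlpha α`-probability of `(x, ∞)` relative to that of
`(0, ∞)`. -/
def logTail (α x : ℝ) : ℝ := Real.log (halfMass α) - Real.log (tailMass α x)

theorem hasDerivAt_logTail (hα : 0 < α) (x : ℝ) :
    HasDerivAt (logTail α) (Real.exp (-|x| ^ α) / tailMass α x) x := by
  refine (((hasDerivAt_tailMass hα x).log (tailMass_pos hα x).ne').const_sub _).congr_deriv ?_
  rw [neg_div, neg_neg]

theorem logTail_zero : logTail α 0 = 0 := sub_self _

theorem logTail_nonneg (hα : 0 < α) {x : ℝ} (hx : 0 ≤ x) : 0 ≤ logTail α x :=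
  sub_nonneg.2 (Real.log_le_log (tailMass_pos hα x) (tailMass_le_halfMass hα hx))

theorem le_logTail (hα : 0 < α) {δ x : ℝ} (hδ : 0 < δ) (hδ1 : δ ≤ 1) (hx : 0 ≤ x) :
    (1 - δ) * x ^ α + Real.log δ / α ≤ logTail α x := by
  have hN := halfMass_pos hα
  have h := Real.log_le_log (tailMass_pos hα x) (tailMass_le hα hδ hδ1 hx)
  rw [Real.log_mul (by positivity) (by positivity), Real.log_mul (by positivity) hN.ne',
    Real.log_exp, Real.log_rpow hδ] at h
  have : -1 / α * Real.log δ = -(Real.log δ / α) := by ring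
  rw [logTail]
  linarith

theorem logTail_le (hα : 0 < α) {m : ℝ} (hm : 1 ≤ m) :
    logTail α m ≤ (2 ^ α + |Real.log (halfMass α)|) * m ^ α := by
  have h := Real.log_le_log (by positivity) (mul_exp_le_tailMass hα (by linarith : 0 ≤ m))
  rw [Real.log_mul (by positivity) (by positivity), Real.log_exp,
    Real.mul_rpow zero_le_two (by linarith)] at h
  have h1 := Real.log_nonneg hm
  have h2 : |Real.log (halfMass α)| ≤ |Real.log (halfMass α)| * m ^ α :=
    le_mul_of_one_le_right (abs_nonneg _) (Real.one_le_rpow hm hα.le)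
  rw [logTail]
  linarith [le_abs_self (Real.log (halfMass α))]

theorem strictMono_logTail (hα : 0 < α) : StrictMono (logTail α) :=
  strictMono_of_deriv_pos fun x => by
    rw [(hasDerivAt_logTail hα x).deriv]
    exact div_pos (Real.exp_pos _) (tailMass_pos hα x)

/-- The increasing map which carries `nuAlpha α` to the symmetric exponential law. -/
def transport (α : ℝ) : ℝ → ℝ := oddExt (logTail α)

theorem hasDerivAt_transport (hα : 0 < α) (x : ℝ) :
    HasDerivAt (transport α) (Real.exp (-|x| ^ α) / tailMass α |x|) x := by
  have := hasDerivAt_oddExt (fun x _ => hasDerivAt_logTail hα x) logTail_zero x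
  rwa [abs_abs] at this

theorem abs_transport (hα : 0 < α) (x : ℝ) : |transport α x| = logTail α |x| :=
  abs_oddExt (fun _ => logTail_nonneg hα) x

theorem twoFunctionBound_nuAlpha (hα : 0 < α) {l : ℝ} (hl : 0 < l) (hl1 : l < 1) :
    TwoFunctionBound (nuAlpha α)
      (fun x y => logCoshWeight l (transport α x - transport α y)) Set.univ := by
  have hN := halfMass_pos hα
  rw [nuAlpha_eq_withDensity hα]
  refine twoFunctionBound_logCoshWeight hl hl1 (fun x => by positivity) (by fun_prop) fun x => ?_
  have hJ := tailMass_pos hα |x|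
  refine (hasDerivAt_transport hα x).congr_deriv ?_
  rw [abs_transport hα, logTail, Real.exp_sub, Real.exp_log hN, Real.exp_log hJ]
  field_simp

theorem le_deriv_transport (hα : 0 < α) {δ : ℝ} (hδ : 0 < δ) (hδ1 : δ ≤ 1) (x : ℝ) :
    δ ^ (1 / α) * Real.exp (-δ * |x| ^ α) / halfMass α ≤
      Real.exp (-|x| ^ α) / tailMass α |x| := by
  have hN := halfMass_pos hα
  have hδα := Real.rpow_pos_of_pos hδ (1 / α)
  rw [le_div_iff₀ (tailMass_pos hα |x|)]
  calc _ ≤ δ ^ (1 / α) * Real.exp (-δ * |x| ^ α) / halfMass α *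
        (Real.exp (-(1 - δ) * |x| ^ α) * (δ ^ (-1 / α) * halfMass α)) := by
        gcongr
        exact tailMass_le hα hδ hδ1 (abs_nonneg x)
    _ = Real.exp (-δ * |x| ^ α) * Real.exp (-(1 - δ) * |x| ^ α) := by
        rw [neg_div, Real.rpow_neg hδ.le]
        field_simp
    _ = Real.exp (-|x| ^ α) := by
        rw [← Real.exp_add]
        ring_nf

theorem mul_abs_sub_le_abs_transport_sub (hα : 0 < α) {δ ρ x y : ℝ} (hδ : 0 < δ) (hδ1 : δ ≤ 1)
    (hx : |x| ≤ ρ) (hy : |y| ≤ ρ) :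
    δ ^ (1 / α) * Real.exp (-δ * ρ ^ α) / halfMass α * |x - y| ≤
      |transport α x - transport α y| := by
  wlog hxy : y ≤ x generalizing x y
  · rw [abs_sub_comm x, abs_sub_comm (transport α x)]
    exact this hy hx (le_of_not_ge hxy)
  have hN := halfMass_pos hα
  refine le_trans ?_ (le_abs_self _)
  rw [abs_of_nonneg (sub_nonneg.2 hxy)]
  have hd := hasDerivAt_transport hα
  refine (convex_Icc (-ρ) ρ).mul_sub_le_image_sub_of_le_deriv
    (fun z _ => (hd z).continuousAt.continuousWithinAt)
    (fun z _ => (hd z).differentiableAt.differentiableWithinAt) (fun z hz => ?_)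
    y (abs_le.1 hy) x (abs_le.1 hx) hxy
  rw [(hd z).deriv]
  refine le_trans ?_ (le_deriv_transport hα hδ hδ1 z)
  have hz' : |z| ≤ ρ := abs_le.2 (Set.mem_Icc.1 (interior_subset hz))
  have := Real.rpow_le_rpow (abs_nonneg z) hz' hα.le
  gcongr δ ^ (1 / α) * Real.exp ?_ / _
  nlinarith

theorem le_abs_transport_sub (hα : 0 < α) {δ m x y : ℝ} (hδ : 0 < δ) (hδ1 : δ ≤ 1) (hm : 1 ≤ m)
    (hy : |y| ≤ m) :
    (1 - δ) * |x| ^ α + Real.log δ / α - (2 ^ α + |Real.log (halfMass α)|) * m ^ α ≤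
      |transport α x - transport α y| := by
  refine le_trans ?_ (abs_sub_abs_le_abs_sub _ _)
  rw [abs_transport hα, abs_transport hα]
  linarith [le_logTail hα hδ hδ1 (abs_nonneg x), logTail_le hα hm,
    (strictMono_logTail hα).monotone hy]

end Transport

section Weights

variable {α ε m x y : ℝ}

theorem one_sub_mul_le_one_sub_rpow (hα : 0 < α) (hε : 0 ≤ ε) (hε1 : ε < 1) :
    1 - (α + 1) * ε ≤ (1 - ε) ^ α := by
  rcases le_total 1 α with h | h
  · have := one_add_mul_self_le_rpow_one_add (s := -ε) (by linarith) h
    rw [← sub_eq_add_neg] at this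
    linarith
  · have := Real.rpow_le_rpow_of_exponent_ge (x := 1 - ε) (by linarith) (by linarith) h
    rw [Real.rpow_one] at this
    nlinarith

theorem rpow_le_mul_exp_half {q s : ℝ} (hq : 0 < q) (hs : 0 ≤ s) :
    s ^ q ≤ (2 * q) ^ q * Real.exp (s / 2) := by
  have h : s / (2 * q) ≤ Real.exp (s / (2 * q)) := by linarith [Real.add_one_le_exp (s / (2 * q))]
  have h2 := Real.rpow_le_rpow (by positivity) h hq.le
  rw [← Real.exp_mul, Real.div_rpow hs (by positivity), div_le_iff₀ (by positivity)] at h2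
  refine h2.trans (le_of_eq ?_)
  rw [mul_comm]
  congr 2
  field_simp

/-- The admissible error constant for large increments. -/
def largeConst (α : ℝ) : ℝ := α + 5 + 1 / α + (2 ^ α + |Real.log (halfMass α)|)

theorem le_logCoshWeight_transport_of_large (hα : 0 < α) (hε : 0 < ε) (hε1 : ε < 1) (hm : 1 ≤ m)
    (hy : |y| ≤ m) (hxy : m / ε < |x - y|) :
    (1 - largeConst α * ε ^ min (α / 2) 1) * |x - y| ^ α ≤
      logCoshWeight ((m / ε) ^ (α / 2))⁻¹ (transport α x - transport α y) := by
  set C := 2 ^ α + |Real.log (halfMass α)| with hC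
  have hC0 : 0 ≤ C := by positivity
  set e := ε ^ min (α / 2) 1 with he
  set T := |x - y| ^ α with hT
  set S := (m / ε) ^ (α / 2) with hS
  have hR1 : 1 ≤ m / ε := by rw [one_le_div hε]; linarith
  have hS1 : 1 ≤ S := Real.one_le_rpow hR1 (by positivity)
  have hS0 : 0 < S := by linarith
  have hl1 : S⁻¹ ≤ 1 := inv_le_one_of_one_le₀ hS1
  have hl0 : 0 < S⁻¹ := inv_pos.2 hS0
  have hT0 : 0 ≤ T := by positivity
  have he0 : 0 < e := by positivity
  have hεe : ε ≤ e := by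
    have := Real.rpow_le_rpow_of_exponent_ge hε hε1.le (min_le_right (α / 2) 1)
    rwa [Real.rpow_one] at this
  have hle : S⁻¹ ≤ e := by
    rw [hS, ← Real.inv_rpow (by positivity), inv_div]
    refine le_trans (Real.rpow_le_rpow (by positivity) (div_le_self hε.le hm) (by positivity)) ?_
    exact Real.rpow_le_rpow_of_exponent_ge hε hε1.le (min_le_left (α / 2) 1)
  have hST : S ^ 2 ≤ T := by
    rw [hS, ← Real.rpow_natCast, ← Real.rpow_mul (by positivity)]
    norm_num
    exact Real.rpow_le_rpow (by positivity) hxy.le hα.le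
  have hSe : S ≤ e * T := by
    calc S = S⁻¹ * S ^ 2 := by field_simp
      _ ≤ e * T := by gcongr
  have hmR : m = ε * (m / ε) := by field_simp
  have hme : m ^ α ≤ e * T := by
    rw [hmR, Real.mul_rpow hε.le (by positivity)]
    refine mul_le_mul (Real.rpow_le_rpow_of_exponent_ge hε hε1.le ?_)
      (Real.rpow_le_rpow (by positivity) hxy.le hα.le) (by positivity) he0.le
    exact (min_le_left _ _).trans (by linarith)
  have hmt : m ≤ ε * |x - y| := by
    rw [hmR]
    gcongr
  have hx : (1 - ε) * |x - y| ≤ |x| := by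
    have := abs_sub x y
    linarith
  have hxT : (1 - (α + 1) * e) * T ≤ |x| ^ α := by
    have h1 := Real.rpow_le_rpow (mul_nonneg (by linarith) (abs_nonneg _)) hx hα.le
    rw [Real.mul_rpow (by linarith) (abs_nonneg _)] at h1
    refine le_trans (mul_le_mul_of_nonneg_right ?_ hT0) h1
    refine le_trans ?_ (one_sub_mul_le_one_sub_rpow hα hε.le hε1)
    nlinarith
  have hlog : -(1 / α * (e * T)) ≤ Real.log S⁻¹ / α := by
    rw [Real.log_inv, neg_div, neg_le_neg_iff, div_eq_inv_mul, one_div]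
    gcongr
    linarith [Real.log_le_sub_one_of_pos hS0]
  have hθ := le_abs_transport_sub (x := x) hα hl0 hl1 hm hy
  refine le_trans ?_ (linear_le_logCoshWeight hl0 hl1 _)
  set θ := |transport α x - transport α y|
  have hprod : ∀ {k z : ℝ}, 0 ≤ k → (1 - k * e) * T ≤ z →
      (1 - (k + 1) * e) * T ≤ (1 - S⁻¹) * z := fun {k z} hk hz => by
    refine le_trans ?_ (mul_le_mul_of_nonneg_left hz (sub_nonneg.2 hl1))
    have h1 : 0 ≤ S⁻¹ * (k * e) * T := by positivity
    have h2 := mul_le_mul_of_nonneg_right hle hT0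
    linarith
  have hCm := mul_le_mul_of_nonneg_left hme hC0
  have h1 := hprod (by positivity) hxT
  have h2 : (1 - (α + 4 + 1 / α + C) * e) * T ≤ θ - 2 / S⁻¹ := by
    rw [div_inv_eq_mul]
    linarith
  have h3 := hprod (by positivity) h2
  refine le_trans (le_of_eq ?_) h3
  rw [largeConst]
  ring

/-- The admissible constant for small increments when `transport α` has slope of order `b`. -/
def smallConst (α b : ℝ) : ℝ :=
  8 * (1 + b ^ 2) * (2 * (1 + 6 / α)) ^ (1 + 6 / α) / b ^ 2

theorem le_logCoshWeight_transport_of_small (hα : 0 < α) (hε : 0 < ε) (hε1 : ε < 1) (hm : 1 ≤ m)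
    (hR : 2 ≤ (m / ε) ^ (α / 2)) (hy : |y| ≤ m) (hxy : |x - y| ≤ m / ε) :
    (smallConst α ((2 ^ (-α) / 4) ^ (1 / α) / halfMass α))⁻¹ *
        Real.exp (-(m / ε) ^ (α / 2)) * (x - y) ^ 2 ≤
      logCoshWeight ((m / ε) ^ (α / 2))⁻¹ (transport α x - transport α y) := by
  have hN := halfMass_pos hα
  set b := (2 ^ (-α) / 4) ^ (1 / α) / halfMass α with hb
  set R := m / ε with hRdef
  set S := R ^ (α / 2) with hS
  have hR0 : 0 < R := by positivity
  have hS0 : 0 < S := by positivity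
  have hS1 : 1 ≤ S := by linarith
  have hb0 : 0 < b := by positivity
  have hl0 : 0 < S⁻¹ := inv_pos.2 hS0
  have hl : S⁻¹ ≤ 1 / 2 := by rw [one_div]; exact inv_anti₀ two_pos hR
  have hRS : R = S ^ (2 / α) := by
    rw [hS, ← Real.rpow_mul hR0.le]
    field_simp
    simp
  have hRα : R ^ α = S ^ 2 := by
    rw [hS, ← Real.rpow_natCast, ← Real.rpow_mul hR0.le]
    norm_num
  set δ := 2 ^ (-α) / 4 * S⁻¹ with hδ
  have hδ0 : 0 < δ := by positivity
  have h2α : (2 : ℝ) ^ (-α) ≤ 1 := Real.rpow_le_one_of_one_le_of_nonpos one_le_two (by linarith)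
  have hδ1 : δ ≤ 1 := by
    calc δ ≤ 1 / 4 * (1 / 2) := by rw [hδ]; gcongr
      _ ≤ 1 := by norm_num
  have hyR : |y| ≤ R := hy.trans (le_div_self (by linarith) hε hε1.le)
  have hx2 : |x| ≤ 2 * R := by linarith [abs_sub_abs_le_abs_sub x y]
  have hθ := mul_abs_sub_le_abs_transport_sub hα hδ0 hδ1 hx2 (by linarith : |y| ≤ 2 * R)
  have hexp : -δ * (2 * R) ^ α = -(S / 4) := by
    rw [Real.mul_rpow zero_le_two hR0.le, hRα, hδ, Real.rpow_neg zero_le_two]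
    field_simp
  set c := b * S ^ (-(1 / α)) * Real.exp (-(S / 4)) with hc
  have hc0 : 0 < c := by positivity
  have hceq : δ ^ (1 / α) * Real.exp (-δ * (2 * R) ^ α) / halfMass α = c := by
    rw [hexp, hδ, Real.mul_rpow (by positivity) (by positivity), Real.inv_rpow hS0.le,
      ← Real.rpow_neg hS0.le, hc, hb]
    ring
  rw [hceq] at hθ
  have hcb : c ≤ b := by
    have h1 : S ^ (-(1 / α)) ≤ 1 :=
      Real.rpow_le_one_of_one_le_of_nonpos hS1 (by simpa using hα.le)
    have h2 : Real.exp (-(S / 4)) ≤ 1 := Real.exp_le_one_iff.2 (by linarith)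
    calc c ≤ b * 1 * 1 := by rw [hc]; gcongr
      _ = b := by ring
  have hmono : logCoshWeight S⁻¹ (c * (x - y)) ≤
      logCoshWeight S⁻¹ (transport α x - transport α y) := by
    refine logCoshWeight_le_of_abs_le hl0 (by linarith) ?_
    rwa [abs_mul, abs_of_pos hc0]
  refine le_trans ?_ hmono
  refine le_trans ?_ (quadratic_le_logCoshWeight hl0 hl _)
  set t := x - y
  have ht2 : t ^ 2 ≤ S ^ (4 / α) := by
    have h1 : t ^ 2 ≤ R ^ 2 := sq_le_sq' (abs_le.1 hxy).1 (abs_le.1 hxy).2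
    refine h1.trans (le_of_eq ?_)
    rw [hRS, ← Real.rpow_natCast, ← Real.rpow_mul hS0.le]
    congr 1
    push_cast
    ring
  have hden : 1 + (S⁻¹ * (c * t) / 2) ^ 2 / 2 ≤ (1 + b ^ 2) * S ^ (4 / α) := by
    have h1 : 1 ≤ S ^ (4 / α) := Real.one_le_rpow hS1 (by positivity)
    have h2 : (S⁻¹ * (c * t) / 2) ^ 2 / 2 ≤ b ^ 2 * S ^ (4 / α) := by
      calc (S⁻¹ * (c * t) / 2) ^ 2 / 2 = S⁻¹ ^ 2 * (c ^ 2 * t ^ 2) / 8 := by ring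
        _ ≤ 1 ^ 2 * (b ^ 2 * S ^ (4 / α)) / 1 := by
          gcongr
          · linarith
          · norm_num
        _ = _ := by ring
    linarith
  set q := 1 + 6 / α with hq
  have hq0 : 0 < q := by positivity
  have hpoly := rpow_le_mul_exp_half hq0 hS0.le
  set K := (2 * q) ^ q with hK
  have hK0 : 0 < K := by positivity
  have hSq : S ^ q = S * (S ^ (1 / α)) ^ 2 * S ^ (4 / α) := by
    rw [← Real.rpow_natCast (S ^ (1 / α)), ← Real.rpow_mul hS0.le]
    nth_rewrite 2 [← Real.rpow_one S]
    rw [← Real.rpow_add hS0, ← Real.rpow_add hS0, hq]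
    congr 1
    push_cast
    ring
  have hc2 : c ^ 2 = b ^ 2 / (S ^ (1 / α)) ^ 2 * Real.exp (-(S / 2)) := by
    have h1 : Real.exp (-(S / 2)) = Real.exp (-(S / 4)) ^ 2 := by
      rw [sq, ← Real.exp_add]
      ring_nf
    rw [hc, Real.rpow_neg hS0.le, h1]
    ring
  calc (smallConst α b)⁻¹ * Real.exp (-S) * t ^ 2
      = b ^ 2 * t ^ 2 * Real.exp (-(S / 2)) / (8 * (1 + b ^ 2) * (K * Real.exp (S / 2))) := by
        have h1 : Real.exp (-S) = Real.exp (-(S / 2)) / Real.exp (S / 2) := by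
          rw [← Real.exp_sub]
          ring_nf
        have h2 : smallConst α b = 8 * (1 + b ^ 2) * K / b ^ 2 := rfl
        rw [h2, h1]
        field_simp
    _ ≤ b ^ 2 * t ^ 2 * Real.exp (-(S / 2)) / (8 * (1 + b ^ 2) * S ^ q) := by gcongr
    _ = S⁻¹ * (c * t) ^ 2 / (8 * ((1 + b ^ 2) * S ^ (4 / α))) := by
        rw [hSq, mul_pow, hc2]
        field_simp
    _ ≤ _ := by gcongr

theorem exists_wAlpha_le_logCoshWeight (hα : 0 < α) :
    ∃ κ > (0 : ℝ), ∃ ε₀ ∈ Set.Ioo (0 : ℝ) 1, ∀ ε ∈ Set.Ioo (0 : ℝ) ε₀, ∀ m : ℝ, 1 ≤ m →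
      ∃ l > (0 : ℝ), l < 1 ∧ ∀ x y : ℝ, |y| ≤ m →
        wAlpha α κ ε m (x - y) ≤ logCoshWeight l (transport α x - transport α y) := by
  have hN := halfMass_pos hα
  set b := (2 ^ (-α) / 4) ^ (1 / α) / halfMass α with hb
  have hb0 : 0 < b := by positivity
  have h1 : 0 < largeConst α := by unfold largeConst; positivity
  have h2 : 0 < smallConst α b := by unfold smallConst; positivity
  refine ⟨largeConst α + smallConst α b, by positivity, min (1 / 2) (2 ^ (-(2 / α))),
    ⟨by positivity, (min_le_left _ _).trans_lt (by norm_num)⟩, ?_⟩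
  rintro ε ⟨hε, hε₀⟩ m hm
  have hε1 : ε < 1 := hε₀.trans ((min_le_left _ _).trans_lt (by norm_num))
  have hR : 2 ≤ (m / ε) ^ (α / 2) := by
    have h : (2 : ℝ) ^ (2 / α) ≤ m / ε := by
      have h3 := inv_anti₀ hε (hε₀.le.trans (min_le_right _ _))
      rw [Real.rpow_neg zero_le_two, inv_inv] at h3
      refine h3.trans ?_
      rw [← one_div]
      gcongr
    have h4 := Real.rpow_le_rpow (by positivity) h (by positivity : 0 ≤ α / 2)
    rwa [← Real.rpow_mul zero_le_two, div_mul_div_cancel₀ hα.ne', div_self two_ne_zero,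
      Real.rpow_one] at h4
  refine ⟨((m / ε) ^ (α / 2))⁻¹, by positivity, inv_lt_one_of_one_lt₀ (by linarith),
    fun x y hy => ?_⟩
  unfold wAlpha
  split_ifs with hxy
  · refine le_trans ?_ (le_logCoshWeight_transport_of_small hα hε hε1 hm hR hy hxy)
    gcongr
    linarith
  · refine le_trans ?_ (le_logCoshWeight_transport_of_large hα hε hε1 hm hy (not_le.1 hxy))
    gcongr
    linarith

end Weights

/-- Proposition (inf-convolution inequalities for `ν_α^n`). -/
theorem tau_property_nuAlpha (α : ℝ) (hα : 0 < α) :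
    -- (a) the case α = 1
    (α = 1 → ∀ ε : ℝ, 0 < ε → ε < 1/2 → ∀ n : ℕ,
      TauProperty (nuPi 1 n) (fun x => ∑ i, wExp ε (x i))) ∧
    -- (b) the case α ≠ 1
    (α ≠ 1 → ∃ κ > (0 : ℝ), ∃ ε₀ ∈ Set.Ioo (0 : ℝ) 1,
      ∀ ε ∈ Set.Ioo (0 : ℝ) ε₀, ∀ m : ℝ, 1 ≤ m → ∀ n : ℕ,
        TruncatedTauProperty (nuPi α n) (fun x => ∑ i, wAlpha α κ ε m (x i))
          (linftyBall m n)) := by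
  refine ⟨fun _ ε hε hε1 n => tauProperty_nuPi_one hε hε1 n, fun _ => ?_⟩
  have := isProbabilityMeasure_nuAlpha hα
  obtain ⟨κ, hκ, ε₀, hε₀, h⟩ := exists_wAlpha_le_logCoshWeight hα
  refine ⟨κ, hκ, ε₀, hε₀, fun ε hε m hm n => ?_⟩
  obtain ⟨l, hl, hl1, hw⟩ := h ε hε m hm
  exact nuPi_truncatedTauProperty (A := {y | |y| ≤ m})
    ((twoFunctionBound_nuAlpha hα hl hl1).mono (Set.subset_univ _) fun _ _ _ => le_rfl)
    (fun _ _ => logCoshWeight_nonneg hl hl1.le _) hw n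

end
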